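/- arXiv:2509.25908 — 4 statements merged into one kernel-verified Lean document; each statement's English description precedes it below -/
import Mathlib

section
/- Let μ be a σ-finite measure on ℝ and let f_i, f_j, f_k be probability densities with respect to μ with f_k > 0 μ-almost everywhere. Let τ be a natural number, c > 0 a real number, and R a measurable subset of ℝ^τ such that for every x = (x_1,…,x_τ) ∈ R one has ∏_{t=1}^τ f_k(x_t) ≤ c · ∏_{t=1}^τ f_j(x_t). Then ∫_R ∏_{t=1}^τ f_i(x_t) d(μ^⊗τ)(x) ≤ c · ( ∫ f_i(x) · (f_j(x)/f_k(x)) dμ(x) )^τ. -/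
open MeasureTheory ENNReal

theorem aux_lintegral_pi_pow (μ : Measure ℝ) [SigmaFinite μ] (g : ℝ → ℝ≥0∞) (hg : Measurable g)
    (n : ℕ) : ∫⁻ x, ∏ t, g (x t) ∂(Measure.pi fun _ : Fin n => μ) = (∫⁻ x, g x ∂μ) ^ n := by
  induction n with
  | zero => simp [Measure.pi_of_empty]
  | succ n ih =>
    have hmp := (measurePreserving_piFinSuccAbove (fun _ : Fin (n+1) => μ) 0).symm
    rw [← hmp.lintegral_comp_emb (MeasurableEquiv.measurableEmbedding _)]
    simp only [MeasurableEquiv.piFinSuccAbove_symm_apply, Fin.insertNthEquiv,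
      Fin.prod_univ_succ, Fin.insertNth_zero, Equiv.coe_fn_mk, Fin.cons_succ, Fin.cons_zero]
    have h2 : Measurable fun x : Fin n → ℝ => ∏ t, g (x t) := by fun_prop
    have := lintegral_prod_mul (μ := μ) (ν := Measure.pi fun _ : Fin n => μ)
      hg.aemeasurable h2.aemeasurable
    rw [pow_succ', ← ih, ← this]
    rfl

/-- Change-of-measure bound: if on the decision region `R ⊆ ℝ^τ` the product
density of `f_k` is at most `c` times that of `f_j`, then the probability of
`R` under i.i.d. samples from `f_i` is at most
`c · (∫ f_i · (f_j / f_k) dμ)^τ`. -/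
theorem change_of_measure_error_bound
    (μ : Measure ℝ) [SigmaFinite μ] (fi fj fk : ℝ → ℝ≥0∞)
    (hfi_meas : Measurable fi) (hfj_meas : Measurable fj) (hfk_meas : Measurable fk)
    (hfi_prob : ∫⁻ x, fi x ∂μ = 1)
    (hfj_prob : ∫⁻ x, fj x ∂μ = 1)
    (hfk_prob : ∫⁻ x, fk x ∂μ = 1)
    (hfk_pos : ∀ᵐ x ∂μ, 0 < fk x)
    (τ : ℕ) (c : ℝ) (hc : 0 < c)
    (R : Set (Fin τ → ℝ)) (hR : MeasurableSet R)
    (hdom : ∀ x ∈ R, ∏ t, fk (x t) ≤ ENNReal.ofReal c * ∏ t, fj (x t)) :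
    ∫⁻ x in R, ∏ t, fi (x t) ∂(Measure.pi fun _ : Fin τ => μ) ≤
      ENNReal.ofReal c * (∫⁻ x, fi x * (fj x / fk x) ∂μ) ^ τ := by
  have hg : Measurable fun x => fi x * (fj x / fk x) := by fun_prop
  have hfin : ∀ᵐ x ∂μ, fk x < ∞ := ae_lt_top hfk_meas (by simp [hfk_prob])
  have hall : ∀ᵐ x ∂(Measure.pi fun _ : Fin τ => μ), ∀ t, 0 < fk (x t) ∧ fk (x t) < ∞ := by
    rw [ae_all_iff]
    intro t
    exact (Measure.quasiMeasurePreserving_eval (fun _ : Fin τ => μ) t).ae (hfk_pos.and hfin)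
  rw [← aux_lintegral_pi_pow μ _ hg, ← lintegral_const_mul' _ _ ofReal_ne_top]
  refine le_trans ?_ (setLIntegral_le_lintegral R _)
  refine lintegral_mono_ae ?_
  filter_upwards [ae_restrict_mem hR, ae_restrict_of_ae hall] with x hx hk
  have h0 : ∏ t, fk (x t) ≠ 0 := Finset.prod_ne_zero_iff.2 fun t _ => (hk t).1.ne'
  have h1 : ∏ t, fk (x t) ≠ ∞ := ENNReal.prod_ne_top fun t _ => (hk t).2.ne
  have h2 : (∏ t, fk (x t)) * ∏ t, (fj (x t) / fk (x t)) = ∏ t, fj (x t) := by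
    rw [← Finset.prod_mul_distrib]
    exact Finset.prod_congr rfl fun t _ => ENNReal.mul_div_cancel (hk t).1.ne' (hk t).2.ne
  have h3 : 1 ≤ ENNReal.ofReal c * ∏ t, (fj (x t) / fk (x t)) := by
    refine (ENNReal.mul_le_mul_iff_right h0 h1).1 ?_
    rw [mul_one, mul_left_comm, h2]
    exact hdom x hx
  rw [Finset.prod_mul_distrib, mul_left_comm]
  exact le_mul_of_one_le_right' h3
end

section
/- Let λ_i, λ_j, λ_k > 0 with λ_i + λ_j > λ_k, and let f_λ denote the density of the exponential distribution with rate λ. Then ∫₀^∞ (f_{λ_j}(x)/f_{λ_k}(x)) · f_{λ_i}(x) dx ≤ 1 if and only if (λ_i − λ_k)·(λ_j − λ_k) ≤ 0. -/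
open MeasureTheory

/-- Density of the exponential distribution with rate `l`. -/
noncomputable def expDensity (l x : ℝ) : ℝ :=
  if 0 ≤ x then l * Real.exp (-(l * x)) else 0

/-- For exponential densities with rates `λ_i, λ_j, λ_k` with
`λ_i + λ_j > λ_k`, the clustering condition `E_{f_i}[f_j/f_k] ≤ 1` holds if and
only if `(λ_i − λ_k)(λ_j − λ_k) ≤ 0`. -/
theorem exp_clustering_condition_iff
    (li lj lk : ℝ) (hli : 0 < li) (hlj : 0 < lj) (hlk : 0 < lk)
    (hsum : lk < li + lj) :
    (∫ x in Set.Ioi (0 : ℝ),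
        (expDensity lj x / expDensity lk x) * expDensity li x ≤ 1) ↔
      (li - lk) * (lj - lk) ≤ 0 := by
  have ha : lk - li - lj < 0 := by linarith
  have hS : 0 < lk * (li + lj - lk) := mul_pos hlk (by linarith)
  have h1 : (∫ x in Set.Ioi (0 : ℝ),
      (expDensity lj x / expDensity lk x) * expDensity li x)
      = ∫ x in Set.Ioi (0 : ℝ), (lj * li / lk) * Real.exp ((lk - li - lj) * x) := by
    refine setIntegral_congr_fun measurableSet_Ioi ?_
    intro x hx
    have hx0 : (0 : ℝ) ≤ x := le_of_lt hx
    have he : Real.exp ((lk - li - lj) * x)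
        = Real.exp (-(lj * x)) / Real.exp (-(lk * x)) * Real.exp (-(li * x)) := by
      rw [← Real.exp_sub, ← Real.exp_add]
      congr 1
      ring
    simp only [expDensity, if_pos hx0]
    rw [he]
    have := Real.exp_ne_zero (-(lk * x))
    field_simp
  have h2 : (lj * li / lk) * (-Real.exp ((lk - li - lj) * 0) / (lk - li - lj))
      = lj * li / (lk * (li + lj - lk)) := by
    have h3 : lk - li - lj ≠ 0 := ha.ne
    have h4 : li + lj - lk ≠ 0 := (sub_pos.mpr hsum).ne'
    rw [mul_zero, Real.exp_zero, show lk - li - lj = -(li + lj - lk) by ring, neg_div_neg_eq]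
    field_simp
  rw [h1, integral_const_mul, integral_exp_mul_Ioi ha, h2, div_le_one hS]
  constructor <;> intro h <;> nlinarith
end

section
/- Let λ_i, λ_j, λ_k > 0 with λ_i + λ_j > λ_k and min(λ_i, λ_j) ≤ λ_k ≤ max(λ_i, λ_j), and let f_λ denote the density of the exponential distribution with rate λ. Then ∫₀^∞ (f_{λ_j}(x)/f_{λ_k}(x)) · f_{λ_i}(x) dx ≤ 1. In particular, when the cluster representative k is chosen as the hypothesis of minimal rate (equivalently, maximal mean 1/λ) in hypothesis i's cluster, so that λ_k ≤ λ_i, and the hypothesis j outside the cluster satisfies λ_j ≤ λ_k, the clustering condition holds. -/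
open MeasureTheory

/-- For exponential densities with rates `λ_i, λ_j, λ_k` with
`λ_i + λ_j > λ_k` and `min(λ_i, λ_j) ≤ λ_k ≤ max(λ_i, λ_j)`, the clustering
condition `E_{f_i}[f_j/f_k] ≤ 1` holds.  In particular this covers the
maximal-mean representative rule, where `λ_j ≤ λ_k ≤ λ_i`. -/
theorem exp_clustering_condition_holds
    (li lj lk : ℝ) (hli : 0 < li) (hlj : 0 < lj) (hlk : 0 < lk)
    (hsum : lk < li + lj)
    (hmin : min li lj ≤ lk) (hmax : lk ≤ max li lj) :
    ∫ x in Set.Ioi (0 : ℝ),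
        (expDensity lj x / expDensity lk x) * expDensity li x ≤ 1 := by
  have hc : -(li + lj - lk) < 0 := by linarith
  have h1 : ∫ x in Set.Ioi (0 : ℝ),
        (expDensity lj x / expDensity lk x) * expDensity li x
      = ∫ x in Set.Ioi (0 : ℝ), (lj / lk * li) * Real.exp (-(li + lj - lk) * x) := by
    apply setIntegral_congr_fun measurableSet_Ioi
    intro x hx
    have hx' : (0 : ℝ) ≤ x := le_of_lt hx
    have he : Real.exp (-(li + lj - lk) * x)
        = Real.exp (-(lj * x)) / Real.exp (-(lk * x)) * Real.exp (-(li * x)) := by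
      rw [← Real.exp_sub, ← Real.exp_add]
      congr 1
      ring
    simp only [expDensity, if_pos hx', he]
    have := Real.exp_pos (-(lk * x))
    field_simp
  rw [h1, integral_const_mul, integral_exp_mul_Ioi hc]
  have hd : 0 < li + lj - lk := by linarith
  have h2 : lj / lk * li * (-Real.exp (-(li + lj - lk) * 0) / -(li + lj - lk))
      = li * lj / (lk * (li + lj - lk)) := by
    rw [mul_zero, Real.exp_zero, neg_div_neg_eq]
    field_simp
  rw [h2, div_le_one (by positivity)]
  rcases le_total li lj with h | h
  · rw [min_eq_left h] at hmin
    rw [max_eq_right h] at hmax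
    nlinarith [mul_nonneg (sub_nonneg.2 hmin) (sub_nonneg.2 hmax)]
  · rw [min_eq_right h] at hmin
    rw [max_eq_left h] at hmax
    nlinarith [mul_nonneg (sub_nonneg.2 hmin) (sub_nonneg.2 hmax)]
end

section
/- Let μ_i, μ_j, μ_k be real numbers and let φ_μ denote the density of the normal distribution with mean μ and unit variance. Then ∫_ℝ (φ_{μ_j}(x)/φ_{μ_k}(x)) · φ_{μ_i}(x) dx ≤ 1 if and only if (μ_j − μ_k)·(μ_i − μ_k) ≤ 0. In particular, if min(μ_i, μ_j) ≤ μ_k ≤ max(μ_i, μ_j), then the clustering condition ∫ (φ_{μ_j}/φ_{μ_k})·φ_{μ_i} dx ≤ 1 holds. -/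
open MeasureTheory

/-- Density of the normal distribution with mean `m` and unit variance. -/
noncomputable def normalDensity (m x : ℝ) : ℝ :=
  (Real.sqrt (2 * Real.pi))⁻¹ * Real.exp (-(x - m) ^ 2 / 2)

theorem normal_clustering_integral (mi mj mk : ℝ) :
    (∫ x : ℝ, (normalDensity mj x / normalDensity mk x) * normalDensity mi x)
      = Real.exp ((mj - mk) * (mi - mk)) := by
  have h : ∀ x : ℝ, (normalDensity mj x / normalDensity mk x) * normalDensity mi x =
      Real.exp ((mj - mk) * (mi - mk)) *
        ProbabilityTheory.gaussianPDFReal (mi + mj - mk) 1 x := by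
    intro x
    have hs : (Real.sqrt (2 * Real.pi))⁻¹ ≠ 0 := by positivity
    unfold normalDensity
    rw [ProbabilityTheory.gaussianPDFReal, mul_div_mul_left _ _ hs, ← Real.exp_sub,
      mul_left_comm, ← Real.exp_add, mul_left_comm, ← Real.exp_add]
    simp only [NNReal.coe_one, mul_one]
    congr 2
    ring
  simp_rw [h]
  rw [integral_const_mul, ProbabilityTheory.integral_gaussianPDFReal_eq_one _ one_ne_zero, mul_one]

/-- For unit-variance normal densities with means `μ_i, μ_j, μ_k`, the
clustering condition `E_{φ_i}[φ_j/φ_k] ≤ 1` holds if and only if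
`(μ_j − μ_k)(μ_i − μ_k) ≤ 0`; in particular it holds whenever
`min(μ_i, μ_j) ≤ μ_k ≤ max(μ_i, μ_j)`. -/
theorem normal_clustering_condition (mi mj mk : ℝ) :
    ((∫ x : ℝ, (normalDensity mj x / normalDensity mk x) * normalDensity mi x) ≤ 1 ↔
      (mj - mk) * (mi - mk) ≤ 0) ∧
    (min mi mj ≤ mk → mk ≤ max mi mj →
      (∫ x : ℝ, (normalDensity mj x / normalDensity mk x) * normalDensity mi x) ≤ 1) := by
  rw [normal_clustering_integral, Real.exp_le_one_iff]
  refine ⟨Iff.rfl, fun h1 h2 => ?_⟩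
  rcases min_le_iff.1 h1 with a | a <;> rcases le_max_iff.1 h2 with b | b
  · simp [le_antisymm a b]
  · nlinarith
  · nlinarith
  · simp [le_antisymm a b]
end
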